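/- On the responsive domain ℛ, the generalized Top Trading Cycles rule TTC is not obviously manipulable: for every responsive profile P, every agent i, and every P'_i ∈ ℛ_i such that TTC_i(P'_i, P_{-i}) P_i TTC_i(P), both (i) B_{P_i}(𝒪_i(P_i)) R_i B_{P_i}(𝒪_i(P'_i)) and (ii) W_{P_i}(𝒪_i(P_i)) R_i W_{P_i}(𝒪_i(P'_i)) hold. -/

import Mathlib

attribute [local instance] Classical.propDecidable

namespace Realloc

/-- A strict preference over bundles: a strict total order on `Finset O`. -/
structure Pref (O : Type) : Type where
  strict : Finset O → Finset O → Prop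
  total : ∀ X Y : Finset O, strict X Y ∨ X = Y ∨ strict Y X
  irrefl : ∀ X : Finset O, ¬ strict X X
  trans : ∀ X Y Z : Finset O, strict X Y → strict Y Z → strict X Z

/-- The weak ("at least as good as") relation associated with a strict preference. -/
def Pref.weak {O : Type} (p : Pref O) (X Y : Finset O) : Prop :=
  p.strict X Y ∨ X = Y

/-- An allocation: nonempty pairwise disjoint bundles whose union is all of `O`. -/
structure Allocation (N O : Type) : Type where
  bundle : N → Finset O
  nonempty : ∀ i : N, (bundle i).Nonempty
  disj : ∀ i j : N, i ≠ j → ∀ o : O, o ∈ bundle i → o ∉ bundle j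
  cover : ∀ o : O, ∃ i : N, o ∈ bundle i

variable {N O : Type}

/-- Two preferences induce the same marginal (singleton) ranking over objects. -/
def MargEq (p q : Pref O) : Prop :=
  ∀ x y : O, p.strict {x} {y} ↔ q.strict {x} {y}

/-- Responsive preferences. -/
def Responsive [DecidableEq O] (p : Pref O) : Prop :=
  ∀ (X : Finset O) (y z : O), y ∉ X → z ∉ X →
    (p.strict (insert y X) (insert z X) ↔ p.strict {y} {z})

/-- Lexicographic preferences: `X` is preferred to `Y` iff the best object of the
symmetric difference belongs to `X`. -/
def Lexicographic [DecidableEq O] (p : Pref O) : Prop :=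
  ∀ X Y : Finset O, X ≠ Y →
    (p.strict X Y ↔
      ∃ x ∈ X \ Y, ∀ y ∈ (X \ Y) ∪ (Y \ X), y ≠ x → p.strict {x} {y})

/-- Conditionally lexicographic preferences. -/
def CondLex [DecidableEq O] (p : Pref O) : Prop :=
  ∀ X Y : Finset O, Disjoint X Y → X.Nonempty →
    ∃! x : O, x ∈ X ∧ ∀ Z : Finset O, Z ⊆ X.erase x → p.strict (insert x Y) (Y ∪ Z)

/-- Monotonic preferences. -/
def Monot (p : Pref O) : Prop :=
  ∀ X Y : Finset O, Y ⊆ X → p.weak X Y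

/-- `p'` is a subset-drop strategy for `p` (relative to endowment `ωi`):
some set `X ⊆ O ∖ ωi` is moved to the bottom of the marginal ranking, preserving
the relative marginal order within `X` and within its complement. -/
def SubsetDropStrategy (ωi : Finset O) (p p' : Pref O) : Prop :=
  ∃ X : Set O, (∀ x ∈ X, x ∉ ωi) ∧
    (∀ x ∈ X, ∀ y ∈ X, (p.strict {x} {y} ↔ p'.strict {x} {y})) ∧
    (∀ x ∉ X, ∀ y ∉ X, (p.strict {x} {y} ↔ p'.strict {x} {y})) ∧
    (∀ x ∈ X, ∀ y ∉ X, p'.strict {y} {x})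

/-- `p'` is a drop strategy for `p`: a single object `x ∉ ωi` is moved to the bottom. -/
def DropStrategy (ωi : Finset O) (p p' : Pref O) : Prop :=
  ∃ x : O, x ∉ ωi ∧
    (∀ u v : O, u ≠ x → v ≠ x → (p.strict {u} {v} ↔ p'.strict {u} {v})) ∧
    (∀ y : O, y ≠ x → p'.strict {y} {x})

/-- `p'` is a truncation strategy for `p`: the tail set
`{o ∈ O ∖ ωi : {x} R {o}}` (for some object `x`) is moved to the bottom. -/
def TruncationStrategy (ωi : Finset O) (p p' : Pref O) : Prop :=
  ∃ x : O,
    (∀ u v : O, (u ∉ ωi ∧ p.weak {x} {u}) → (v ∉ ωi ∧ p.weak {x} {v}) →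
      (p.strict {u} {v} ↔ p'.strict {u} {v})) ∧
    (∀ u v : O, ¬(u ∉ ωi ∧ p.weak {x} {u}) → ¬(v ∉ ωi ∧ p.weak {x} {v}) →
      (p.strict {u} {v} ↔ p'.strict {u} {v})) ∧
    (∀ u v : O, (u ∉ ωi ∧ p.weak {x} {u}) → ¬(v ∉ ωi ∧ p.weak {x} {v}) →
      p'.strict {v} {u})

/-- There is a Pareto-improving trading cycle at the assignment `μ`:
a cyclic sequence of `k+1 ≥ 1` distinct objects and distinct agents, each object owned
(at `μ`) by its agent, such that every agent on the cycle strictly gains by swapping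
the object she relinquishes for the object she points to. -/
def ParetoImprovingCycleAt [DecidableEq O] (pref : N → Pref O) (μ : N → Finset O) : Prop :=
  ∃ (k : ℕ) (obj : Fin (k + 1) → O) (ag : Fin (k + 1) → N),
    Function.Injective obj ∧ Function.Injective ag ∧
    (∀ ℓ : Fin (k + 1), obj ℓ ∈ μ (ag ℓ)) ∧
    (∀ ℓ : Fin (k + 1),
      (pref (ag ℓ)).strict ((insert (obj (ℓ + 1)) (μ (ag ℓ))).erase (obj ℓ)) (μ (ag ℓ)))

/-- Individual-good efficiency of an assignment at a profile. -/
def IGEat [DecidableEq O] (pref : N → Pref O) (μ : N → Finset O) : Prop :=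
  ¬ ParetoImprovingCycleAt pref μ

/-- `ν` Pareto dominates `μ` at the profile `pref`. -/
def ParetoDominates (pref : N → Pref O) (ν μ : N → Finset O) : Prop :=
  (∀ i, (pref i).weak (ν i) (μ i)) ∧ ∃ j, (pref j).strict (ν j) (μ j)

/-- Pareto efficiency of an assignment at a profile. -/
def ParetoEffAt (pref : N → Pref O) (μ : N → Finset O) : Prop :=
  ∀ ν : Allocation N O, ¬ ParetoDominates pref ν.bundle μ

/-- The marginally most-preferred object of a (nonempty) finite set of objects. -/
noncomputable def Pref.best [Nonempty O] (p : Pref O) (S : Finset O) : O :=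
  if h : ∃ x : O, x ∈ S ∧ ∀ y ∈ S, p.weak {x} {y} then h.choose
  else Classical.arbitrary O

/-- The conditionally most-preferred object of `S` given the already-held bundle `Y`. -/
noncomputable def Pref.cbest [Nonempty O] [DecidableEq O] (p : Pref O) (S Y : Finset O) : O :=
  if h : ∃ x : O, x ∈ S ∧ ∀ Z : Finset O, Z ⊆ S.erase x → p.strict (insert x Y) (Y ∪ Z)
  then h.choose else Classical.arbitrary O

/-- The initial owner of an object. -/
noncomputable def Allocation.owner (ω : Allocation N O) (o : O) : N :=
  (ω.cover o).choose

/-- One pass of the generalized TTC algorithm, with fuel.  At each step every agent points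
to her marginally best remaining object and every remaining object points to its owner;
the objects lying on cycles of this functional graph (the periodic points of `g`) are
traded: the owner of a cycling object receives the object she points to. -/
noncomputable def TTCaux [Nonempty O] [DecidableEq O] (pref : N → Pref O) (own : O → N) :
    ℕ → Finset O → N → Finset O
  | 0, _, _ => ∅
  | fuel + 1, S, i =>
      let g : O → O := fun o => (pref (own o)).best S
      let C : Finset O := S.filter fun o => ∃ k : ℕ, 0 < k ∧ g^[k] o = o
      if S.Nonempty then
        ((C.filter fun o => own o = i).image g) ∪ TTCaux pref own fuel (S \ C) i
      else ∅

/-- The generalized Top Trading Cycles rule: the bundle received by agent `i`. -/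
noncomputable def TTC [Fintype O] [Nonempty O] [DecidableEq O]
    (pref : N → Pref O) (ω : Allocation N O) (i : N) : Finset O :=
  TTCaux pref ω.owner (Fintype.card O + 1) Finset.univ i

/-- One pass of the Augmented TTC algorithm, with fuel: agents point to their
conditionally most-preferred remaining object given the bundle assigned so far. -/
noncomputable def ATTCaux [Nonempty O] [DecidableEq O] (pref : N → Pref O) (own : O → N) :
    ℕ → Finset O → (N → Finset O) → N → Finset O
  | 0, _, μ => μ
  | fuel + 1, S, μ =>
      let g : O → O := fun o => (pref (own o)).cbest S (μ (own o))
      let C : Finset O := S.filter fun o => ∃ k : ℕ, 0 < k ∧ g^[k] o = o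
      if S.Nonempty then
        ATTCaux pref own fuel (S \ C) (fun j => μ j ∪ ((C.filter fun o => own o = j).image g))
      else μ

/-- The Augmented Top Trading Cycles rule: the bundle received by agent `i`. -/
noncomputable def ATTC [Fintype O] [Nonempty O] [DecidableEq O]
    (pref : N → Pref O) (ω : Allocation N O) (i : N) : Finset O :=
  ATTCaux pref ω.owner (Fintype.card O + 1) Finset.univ (fun _ => ∅) i

/-- Conditional marginal preference of `p` given the bundle `Y`:
`x` is conditionally better than `y`. -/
def CMarg [DecidableEq O] (p : Pref O) (Y : Finset O) (x y : O) : Prop :=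
  p.strict ((insert x Y).erase y) ((insert y Y).erase x)

/-- Weak conditional marginal preference. -/
def CMargWeak [DecidableEq O] (p : Pref O) (Y : Finset O) (x y : O) : Prop :=
  CMarg p Y x y ∨ x = y

/-- Drop strategy on the conditionally lexicographic domain: `x ∉ ωi` becomes the worst,
with preferences over bundles avoiding `x` unchanged. -/
def DropStrategyCL (ωi : Finset O) (p p' : Pref O) : Prop :=
  ∃ x : O, x ∉ ωi ∧
    (∀ Y : Finset O, Y.Nonempty → x ∉ Y → p'.strict Y {x}) ∧
    (∀ Y Z : Finset O, x ∉ Y → x ∉ Z → (p'.strict Y Z ↔ p.strict Y Z))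

section Rules

variable [DecidableEq O]

/-- Balancedness of a rule on the domain `D`. -/
def RBAL (D : Pref O → Prop) (ω : Allocation N O)
    (φ : (N → Pref O) → Allocation N O) : Prop :=
  ∀ P : N → Pref O, (∀ i, D (P i)) → ∀ i, ((φ P).bundle i).card = (ω.bundle i).card

/-- Individual-good efficiency of a rule on the domain `D`. -/
def RIGE (D : Pref O → Prop) (φ : (N → Pref O) → Allocation N O) : Prop :=
  ∀ P : N → Pref O, (∀ i, D (P i)) → IGEat P ((φ P).bundle)

/-- Pareto efficiency of a rule on the domain `D`. -/
def RPE (D : Pref O → Prop) (φ : (N → Pref O) → Allocation N O) : Prop :=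
  ∀ P : N → Pref O, (∀ i, D (P i)) → ParetoEffAt P ((φ P).bundle)

/-- Individual rationality of a rule on the domain `D`. -/
def RIR (D : Pref O → Prop) (ω : Allocation N O)
    (φ : (N → Pref O) → Allocation N O) : Prop :=
  ∀ P : N → Pref O, (∀ i, D (P i)) → ∀ i, (P i).weak ((φ P).bundle i) (ω.bundle i)

/-- The worst-endowment lower bound of a rule on the domain `D`: no agent receives an
object marginally worse than the marginally worst object of her endowment. -/
def RWELB (D : Pref O → Prop) (ω : Allocation N O)
    (φ : (N → Pref O) → Allocation N O) : Prop :=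
  ∀ P : N → Pref O, (∀ i, D (P i)) → ∀ i, ∀ o ∈ (φ P).bundle i,
    ∀ w ∈ ω.bundle i, (∀ y ∈ ω.bundle i, (P i).weak {y} {w}) → (P i).weak {o} {w}

/-- Marginality of a rule on the domain `D`. -/
def RMAR (D : Pref O → Prop) (φ : (N → Pref O) → Allocation N O) : Prop :=
  ∀ P P' : N → Pref O, (∀ i, D (P i)) → (∀ i, D (P' i)) →
    (∀ i, MargEq (P i) (P' i)) → ∀ i, (φ P).bundle i = (φ P').bundle i

variable [DecidableEq N]

/-- Truncation-proofness of a rule on the domain `D`. -/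
def RTP (D : Pref O → Prop) (ω : Allocation N O)
    (φ : (N → Pref O) → Allocation N O) : Prop :=
  ∀ P : N → Pref O, (∀ i, D (P i)) → ∀ i : N, ∀ p' : Pref O, D p' →
    TruncationStrategy (ω.bundle i) (P i) p' →
    (P i).weak ((φ P).bundle i) ((φ (Function.update P i p')).bundle i)

/-- Drop strategy-proofness of a rule on the domain `D`. -/
def RDSP (D : Pref O → Prop) (ω : Allocation N O)
    (φ : (N → Pref O) → Allocation N O) : Prop :=
  ∀ P : N → Pref O, (∀ i, D (P i)) → ∀ i : N, ∀ p' : Pref O, D p' →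
    DropStrategy (ω.bundle i) (P i) p' →
    (P i).weak ((φ P).bundle i) ((φ (Function.update P i p')).bundle i)

/-- Subset-drop strategy-proofness of a rule on the domain `D`. -/
def RSDSP (D : Pref O → Prop) (ω : Allocation N O)
    (φ : (N → Pref O) → Allocation N O) : Prop :=
  ∀ P : N → Pref O, (∀ i, D (P i)) → ∀ i : N, ∀ p' : Pref O, D p' →
    SubsetDropStrategy (ω.bundle i) (P i) p' →
    (P i).weak ((φ P).bundle i) ((φ (Function.update P i p')).bundle i)

/-- Worst-endowment lower bound on the conditionally lexicographic domain, formulated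
with conditional marginal preferences. -/
def RWELBCL (D : Pref O → Prop) (ω : Allocation N O)
    (φ : (N → Pref O) → Allocation N O) : Prop :=
  ∀ P : N → Pref O, (∀ i, D (P i)) → ∀ i, ∀ o ∈ (φ P).bundle i,
    ∀ w ∈ ω.bundle i,
      (∀ y ∈ ω.bundle i, CMargWeak (P i) ((φ P).bundle i) y w) →
      CMargWeak (P i) ((φ P).bundle i) o w

/-- Drop strategy-proofness on the conditionally lexicographic domain. -/
def RDSPCL (D : Pref O → Prop) (ω : Allocation N O)
    (φ : (N → Pref O) → Allocation N O) : Prop :=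
  ∀ P : N → Pref O, (∀ i, D (P i)) → ∀ i : N, ∀ p' : Pref O, D p' →
    DropStrategyCL (ω.bundle i) (P i) p' →
    (P i).weak ((φ P).bundle i) ((φ (Function.update P i p')).bundle i)

end Rules

/-- Agent `i`'s opportunity set under TTC when reporting `p`: the set of bundles
she may receive as others' (responsive) reports vary. -/
def Opp [Fintype O] [Nonempty O] [DecidableEq O] (ω : Allocation N O) (i : N)
    (p : Pref O) : Set (Finset O) :=
  {A | ∃ Q : N → Pref O, (∀ j, Responsive (Q j)) ∧ Q i = p ∧ TTC Q ω i = A}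


section Helpers

variable [DecidableEq O]

theorem wk_trans (p : Pref O) {X Y Z : Finset O} (h1 : p.weak X Y) (h2 : p.weak Y Z) :
    p.weak X Z := by
  rcases h1 with h1 | rfl
  · rcases h2 with h2 | rfl
    · exact Or.inl (p.trans _ _ _ h1 h2)
    · exact Or.inl h1
  · exact h2

theorem wk_antisymm (p : Pref O) {X Y : Finset O} (h1 : p.weak X Y) (h2 : p.weak Y X) :
    X = Y := by
  rcases h1 with h1 | rfl
  · rcases h2 with h2 | rfl
    · exact absurd (p.trans _ _ _ h1 h2) (p.irrefl _)
    · rfl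
  · rfl

theorem wk_of_not_st (p : Pref O) {X Y : Finset O} (h : ¬ p.strict Y X) : p.weak X Y := by
  rcases p.total X Y with h1 | h1 | h1
  · exact Or.inl h1
  · exact Or.inr h1
  · exact absurd h1 h

theorem wk_refl (p : Pref O) (X : Finset O) : p.weak X X := Or.inr rfl

theorem exists_top (p : Pref O) (S : Finset O) (hS : S.Nonempty) :
    ∃ x : O, x ∈ S ∧ ∀ y ∈ S, p.weak {x} {y} := by
  induction hS using Finset.Nonempty.cons_induction with
  | singleton a =>
    refine ⟨a, by simp, fun y hy => ?_⟩
    rw [Finset.mem_singleton] at hy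
    subst hy
    exact wk_refl _ _
  | cons a s ha hs ih =>
    obtain ⟨x, hx, hm⟩ := ih
    by_cases h : p.strict {a} {x}
    · refine ⟨a, by simp, fun y hy => ?_⟩
      rcases Finset.mem_cons.1 hy with rfl | hy
      · exact wk_refl _ _
      · exact wk_trans p (Or.inl h) (hm y hy)
    · refine ⟨x, by simp [hx], fun y hy => ?_⟩
      rcases Finset.mem_cons.1 hy with rfl | hy
      · exact wk_of_not_st p h
      · exact hm y hy

theorem best_spec [Nonempty O] (p : Pref O) (S : Finset O) (hS : S.Nonempty) :
    p.best S ∈ S ∧ ∀ y ∈ S, p.weak {p.best S} {y} := by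
  have h := exists_top p S hS
  unfold Pref.best
  rw [dif_pos h]
  exact h.choose_spec

theorem dom_weak (p : Pref O) (hp : Responsive p) (n : ℕ) : ∀ (A B : Finset O),
    (A \ B).card = n → A.card = B.card →
    (∀ t : O, (B.filter fun y => p.weak {y} {t}).card ≤ (A.filter fun y => p.weak {y} {t}).card) →
    p.weak A B := by
  induction n with
  | zero =>
    intro A B h0 hc _
    have hs : A ⊆ B := Finset.sdiff_eq_empty_iff_subset.1 (Finset.card_eq_zero.1 h0)
    exact Or.inr (Finset.eq_of_subset_of_card_le hs hc.ge)
  | succ n ih =>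
    intro A B hn hc hd
    have hBA : (B \ A).Nonempty := by
      have := Finset.card_sdiff_add_card_inter A B
      have h2 := Finset.card_sdiff_add_card_inter B A
      rw [Finset.inter_comm] at h2
      apply Finset.card_pos.1
      omega
    obtain ⟨w, hw, hwm⟩ := exists_top p _ hBA
    rw [Finset.mem_sdiff] at hw
    have key : ∃ x, x ∈ A ∧ x ∉ B ∧ p.weak {x} {w} := by
      by_contra hno
      push Not at hno
      have hsub : (A.filter fun y => p.weak {y} {w}) ⊂ (B.filter fun y => p.weak {y} {w}) := by
        rw [Finset.ssubset_iff_of_subset]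
        · exact ⟨w, by simp [hw.1, wk_refl], by simp [hw.2]⟩
        · intro y hy
          rw [Finset.mem_filter] at hy ⊢
          refine ⟨?_, hy.2⟩
          by_contra hyB
          exact hno y hy.1 hyB hy.2
      have := Finset.card_lt_card hsub
      have := hd w
      omega
    obtain ⟨x, hxA, hxB, hxw⟩ := key
    have hne : x ≠ w := fun h => hw.2 (h ▸ hxA)
    have hst : p.strict {x} {w} := by
      rcases hxw with h | h
      · exact h
      · exact absurd (Finset.singleton_injective h) hne
    have hwe : w ∉ A.erase x := fun h => hw.2 (Finset.mem_of_mem_erase h)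
    have h1 : p.strict A (insert w (A.erase x)) := by
      have := (hp (A.erase x) x w (Finset.notMem_erase _ _) hwe).2 hst
      rwa [Finset.insert_erase hxA] at this
    refine wk_trans p (Or.inl h1) (ih _ _ ?_ ?_ ?_)
    · have : insert w (A.erase x) \ B = (A \ B).erase x := by
        ext y
        simp only [Finset.mem_sdiff, Finset.mem_insert, Finset.mem_erase]
        constructor
        · rintro ⟨rfl | h, h2⟩
          · exact absurd hw.1 h2
          · exact ⟨h.1, h.2, h2⟩
        · rintro ⟨h, h2, h3⟩
          exact ⟨Or.inr ⟨h, h2⟩, h3⟩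
      rw [this, Finset.card_erase_of_mem (by simp [hxA, hxB]), hn]
      rfl
    · rw [Finset.card_insert_of_notMem hwe, Finset.card_erase_add_one hxA, hc]
    · intro t
      rw [Finset.filter_insert, Finset.filter_erase]
      have hwe2 : w ∉ (A.filter fun y => p.weak {y} {t}).erase x := by
        simp [hw.2]
      by_cases hwt : p.weak {w} {t}
      · have hxt : p.weak {x} {t} := wk_trans p hxw hwt
        rw [if_pos hwt, Finset.card_insert_of_notMem hwe2,
          Finset.card_erase_add_one (by simp [hxA, hxt])]
        exact hd t
      · rw [if_neg hwt]
        by_cases hxt : p.weak {x} {t}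
        · apply Finset.card_le_card
          intro y hy
          rw [Finset.mem_filter] at hy
          have hyA : y ∈ A := by
            by_contra hyA
            exact hwt (wk_trans p (hwm y (Finset.mem_sdiff.2 ⟨hy.1, hyA⟩)) hy.2)
          simp only [Finset.mem_erase, Finset.mem_filter]
          exact ⟨fun h => hxB (h ▸ hy.1), hyA, hy.2⟩
        · rw [Finset.erase_eq_of_notMem (by simp [hxt])]
          exact hd t

theorem top_weak (p : Pref O) (hp : Responsive p) (A B : Finset O) (hc : A.card = B.card)
    (h : ∀ a ∈ A, ∀ b, b ∉ A → p.strict {a} {b}) : p.weak A B := by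
  refine dom_weak p hp _ A B rfl hc fun t => ?_
  by_cases hall : ∀ a ∈ A, p.weak {a} {t}
  · rw [Finset.filter_true_of_mem hall, hc]
    exact Finset.card_filter_le _ _
  · push Not at hall
    obtain ⟨a, ha, hat⟩ := hall
    apply Finset.card_le_card
    intro b hb
    rw [Finset.mem_filter] at hb ⊢
    refine ⟨?_, hb.2⟩
    by_contra hbA
    exact hat (wk_trans p (Or.inl (h a ha b hbA)) hb.2)

/-- The preference represented by the sums of powers of two. -/
noncomputable def prefOf (r : O → ℕ) (hr : Function.Injective r) : Pref O where
  strict X Y := ∑ y ∈ Y, 2 ^ r y < ∑ x ∈ X, 2 ^ r x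
  total X Y := by
    rcases lt_trichotomy (∑ y ∈ Y, 2 ^ r y) (∑ x ∈ X, 2 ^ r x) with h | h | h
    · exact Or.inl h
    · right; left
      have h2 := Finset.geomSum_injective (n := 2) le_rfl
      have h3 : ∀ Z : Finset O, ∑ z ∈ Z, 2 ^ r z = ∑ k ∈ Z.image r, 2 ^ k := fun Z => by
        rw [Finset.sum_image (fun a _ b _ hab => hr hab)]
      rw [h3, h3] at h
      exact (Finset.image_injective hr (h2 h)).symm
    · exact Or.inr (Or.inr h)
  irrefl X := lt_irrefl _
  trans X Y Z h1 h2 := lt_trans h2 h1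

theorem prefOf_resp (r : O → ℕ) (hr : Function.Injective r) : Responsive (prefOf r hr) := by
  intro X y z hy hz
  simp [prefOf, Finset.sum_insert hy, Finset.sum_insert hz]

theorem prefOf_weak (r : O → ℕ) (hr : Function.Injective r) (x y : O) :
    (prefOf r hr).weak {x} {y} → r y ≤ r x := by
  rintro (h | h)
  · simp only [prefOf, Finset.sum_singleton] at h
    exact ((Nat.pow_lt_pow_iff_right (by norm_num)).1 h).le
  · rw [Finset.singleton_injective h]

/-- Rank of an object. -/
noncomputable def rk [Fintype O] (p : Pref O) (x : O) : ℕ :=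
  (Finset.univ.filter fun y : O => p.strict {x} {y}).card

theorem rk_lt [Fintype O] (p : Pref O) (x y : O) (h : p.strict {x} {y}) : rk p y < rk p x := by
  apply Finset.card_lt_card
  rw [Finset.ssubset_iff_of_subset]
  · exact ⟨y, by simp [h], by simp [p.irrefl]⟩
  · intro z hz
    simp only [Finset.mem_filter, Finset.mem_univ, true_and] at hz ⊢
    exact p.trans _ _ _ h hz

theorem rk_bound [Fintype O] (p : Pref O) (x : O) : rk p x < Fintype.card O := by
  apply Finset.card_lt_card
  rw [Finset.ssubset_iff_of_subset (Finset.filter_subset _ _)]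
  exact ⟨x, by simp, by simp [p.irrefl]⟩

theorem rk_inj [Fintype O] (p : Pref O) : Function.Injective (rk p) := by
  intro x y h
  rcases p.total {x} {y} with h1 | h1 | h1
  · have := rk_lt p _ _ h1; omega
  · exact Finset.singleton_injective h1
  · have := rk_lt p _ _ h1; omega

variable [Nonempty O]

/-- The pointing map. -/
noncomputable def gg (pref : N → Pref O) (own : O → N) (S : Finset O) (o : O) : O :=
  (pref (own o)).best S

/-- The set of cycling objects. -/
noncomputable def CC (pref : N → Pref O) (own : O → N) (S : Finset O) : Finset O :=
  S.filter fun o => ∃ k : ℕ, 0 < k ∧ (gg pref own S)^[k] o = o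

theorem aux_succ (pref : N → Pref O) (own : O → N) (f : ℕ) (S : Finset O) (hS : S.Nonempty)
    (i : N) : TTCaux pref own (f + 1) S i =
      (((CC pref own S).filter fun o => own o = i).image (gg pref own S)) ∪
        TTCaux pref own f (S \ CC pref own S) i := by
  rw [TTCaux]
  simp only [hS, if_true]
  rfl

theorem aux_empty (pref : N → Pref O) (own : O → N) (f : ℕ) (i : N) :
    TTCaux pref own f ∅ i = ∅ := by
  cases f <;> simp [TTCaux]

theorem gg_mem (pref : N → Pref O) (own : O → N) {S : Finset O} (hS : S.Nonempty) (o : O) :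
    gg pref own S o ∈ S := (best_spec _ _ hS).1

theorem CC_sub (pref : N → Pref O) (own : O → N) (S : Finset O) : CC pref own S ⊆ S :=
  Finset.filter_subset _ _

theorem CC_nonempty (pref : N → Pref O) (own : O → N) {S : Finset O} (hS : S.Nonempty) :
    (CC pref own S).Nonempty := by
  obtain ⟨x, hx⟩ := hS
  have hmem : ∀ k, (gg pref own S)^[k] x ∈ S := by
    intro k
    cases k with
    | zero => exact hx
    | succ k => rw [Function.iterate_succ_apply']; exact gg_mem _ _ ⟨x, hx⟩ _
  obtain ⟨a, b, hab, he⟩ := Finite.exists_ne_map_eq_of_infinite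
    (fun k : ℕ => (⟨(gg pref own S)^[k] x, hmem k⟩ : S))
  have he' : (gg pref own S)^[a] x = (gg pref own S)^[b] x := congrArg Subtype.val he
  wlog hlt : a < b generalizing a b
  · exact this b a hab.symm he.symm he'.symm (by omega)
  refine ⟨(gg pref own S)^[a] x, ?_⟩
  rw [CC, Finset.mem_filter]
  refine ⟨hmem a, b - a, by omega, ?_⟩
  rw [← Function.iterate_add_apply, Nat.sub_add_cancel hlt.le, he']

theorem gg_CC (pref : N → Pref O) (own : O → N) {S : Finset O} (hS : S.Nonempty) {o : O}
    (ho : o ∈ CC pref own S) : gg pref own S o ∈ CC pref own S := by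
  rw [CC, Finset.mem_filter] at ho ⊢
  obtain ⟨_, k, hk, he⟩ := ho
  refine ⟨gg_mem _ _ hS _, k, hk, ?_⟩
  rw [← Function.iterate_succ_apply, Function.iterate_succ_apply', he]

theorem gg_inj (pref : N → Pref O) (own : O → N) {S : Finset O} {o o' : O}
    (ho : o ∈ CC pref own S) (ho' : o' ∈ CC pref own S)
    (h : gg pref own S o = gg pref own S o') : o = o' := by
  rw [CC, Finset.mem_filter] at ho ho'
  obtain ⟨_, k, hk, he⟩ := ho
  obtain ⟨_, k', hk', he'⟩ := ho'
  have h1 : Function.IsPeriodicPt (gg pref own S) k o := he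
  have h2 : Function.IsPeriodicPt (gg pref own S) k' o' := he'
  have h3 := h1.mul_const k'
  have h4 := h2.const_mul k
  have hpos : 0 < k * k' := Nat.mul_pos hk hk'
  obtain ⟨m, hm⟩ : ∃ m, k * k' = m + 1 := ⟨k * k' - 1, by omega⟩
  rw [hm] at h3 h4
  have e3 : (gg pref own S)^[m + 1] o = o := h3
  have e4 : (gg pref own S)^[m + 1] o' = o' := h4
  rw [Function.iterate_succ_apply] at e3 e4
  rw [← e3, ← e4, h]

theorem card_sdiff_CC (pref : N → Pref O) (own : O → N) {S : Finset O} (hS : S.Nonempty) {f : ℕ}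
    (h : S.card ≤ f + 1) : (S \ CC pref own S).card ≤ f := by
  have h1 := Finset.card_pos.2 (CC_nonempty pref own hS)
  have h2 := Finset.card_sdiff_add_card_eq_card (CC_sub pref own S)
  omega

theorem aux_sub (pref : N → Pref O) (own : O → N) (i : N) (f : ℕ) : ∀ S : Finset O,
    TTCaux pref own f S i ⊆ S := by
  induction f with
  | zero => intro S; simp [TTCaux]
  | succ f ih =>
    intro S
    rcases S.eq_empty_or_nonempty with rfl | hS
    · simp [aux_empty]
    rw [aux_succ _ _ _ _ hS]
    apply Finset.union_subset
    · intro y hy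
      obtain ⟨o, _, rfl⟩ := Finset.mem_image.1 hy
      exact gg_mem _ _ hS _
    · exact (ih _).trans Finset.sdiff_subset

theorem aux_count (pref : N → Pref O) (own : O → N) (i : N) (U V : O → Prop)
    (hUV : ∀ S : Finset O, S.Nonempty → ∀ o ∈ S, own o = i → U o → V (gg pref own S o))
    (f : ℕ) : ∀ S : Finset O, S.card ≤ f →
    ((S.filter fun o => own o = i).filter U).card ≤ ((TTCaux pref own f S i).filter V).card := by
  induction f with
  | zero => intro S hS; simp [Finset.card_eq_zero.1 (Nat.le_zero.1 hS)]
  | succ f ih =>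
    intro S hSc
    rcases S.eq_empty_or_nonempty with rfl | hS
    · simp
    rw [aux_succ _ _ _ _ hS, Finset.filter_union, Finset.card_union_of_disjoint]
    · have h1 := ih _ (card_sdiff_CC pref own hS hSc)
      have h2 : ((S.filter fun o => own o = i).filter U) =
          (((CC pref own S).filter fun o => own o = i).filter U) ∪
          (((S \ CC pref own S).filter fun o => own o = i).filter U) := by
        rw [← Finset.filter_union, ← Finset.filter_union,
          Finset.union_sdiff_of_subset (CC_sub pref own S)]
      rw [h2]
      refine (Finset.card_union_le _ _).trans (Nat.add_le_add ?_ h1)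
      refine Finset.card_le_card_of_injOn (gg pref own S) ?_ ?_
      · intro o ho
        simp only [Finset.coe_filter, Finset.mem_filter, Set.mem_setOf_eq] at ho
        simp only [Finset.coe_filter, Finset.mem_image, Finset.mem_filter, Set.mem_setOf_eq]
        exact ⟨⟨o, ho.1, rfl⟩, hUV S hS o (CC_sub _ _ _ ho.1.1) ho.1.2 ho.2⟩
      · intro o ho o' ho' h
        simp only [Finset.coe_filter, Finset.mem_filter, Set.mem_setOf_eq] at ho ho'
        exact gg_inj pref own ho.1.1 ho'.1.1 h
    · rw [Finset.disjoint_left]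
      intro y hy hy'
      rw [Finset.mem_filter] at hy hy'
      obtain ⟨o, ho, rfl⟩ := Finset.mem_image.1 hy.1
      have := gg_CC pref own hS (Finset.mem_filter.1 ho).1
      exact (Finset.mem_sdiff.1 (aux_sub _ _ _ _ _ hy'.1)).2 this

theorem aux_card_le (pref : N → Pref O) (own : O → N) (i : N) (f : ℕ) : ∀ S : Finset O,
    (TTCaux pref own f S i).card ≤ (S.filter fun o => own o = i).card := by
  induction f with
  | zero => intro S; simp [TTCaux]
  | succ f ih =>
    intro S
    rcases S.eq_empty_or_nonempty with rfl | hS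
    · simp [aux_empty]
    rw [aux_succ _ _ _ _ hS]
    refine (Finset.card_union_le _ _).trans
      ((Nat.add_le_add Finset.card_image_le (ih _)).trans ?_)
    rw [← Finset.card_union_of_disjoint, ← Finset.filter_union,
      Finset.union_sdiff_of_subset (CC_sub pref own S)]
    exact Finset.disjoint_filter_filter Finset.disjoint_sdiff

theorem aux_card (pref : N → Pref O) (own : O → N) (i : N) (f : ℕ) (S : Finset O)
    (h : S.card ≤ f) :
    (TTCaux pref own f S i).card = (S.filter fun o => own o = i).card := by
  apply le_antisymm (aux_card_le _ _ _ _ _)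
  have := aux_count pref own i (fun _ => True) (fun _ => True) (by simp) f S h
  simpa using this

theorem aux_ir (pref : N → Pref O) (own : O → N) (i : N) (hi : Responsive (pref i)) (f : ℕ)
    (S : Finset O) (h : S.card ≤ f) :
    (pref i).weak (TTCaux pref own f S i) (S.filter fun o => own o = i) := by
  refine dom_weak _ hi _ _ _ rfl (aux_card _ _ _ _ _ h) fun t => ?_
  refine aux_count pref own i _ _ ?_ f S h
  intro S hS o ho hoi hU
  refine wk_trans _ ?_ hU
  have := (best_spec (pref (own o)) S hS).2 o ho
  rw [hoi] at this
  rw [gg, hoi]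
  exact this

theorem aux_top (pref : N → Pref O) (own : O → N) (i : N)
    (hq : ∀ j, j ≠ i → ∀ S : Finset O, (∃ o ∈ S, own o = i) → own ((pref j).best S) = i ∧
      ∀ o ∈ S, own o = i → (pref i).weak {o} {(pref j).best S})
    (hqq : ∀ j k, j ≠ i → k ≠ i → pref j = pref k)
    (f : ℕ) : ∀ S : Finset O, S.card ≤ f → ∀ a ∈ TTCaux pref own f S i,
      ∀ b ∈ S, b ∉ TTCaux pref own f S i → (pref i).strict {a} {b} := by
  induction f with
  | zero => intro S hS; simp [TTCaux]
  | succ f ih =>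
    intro S hSc a ha b hb hbA
    have hS : S.Nonempty := ⟨b, hb⟩
    have hE : (S.filter fun o => own o = i).Nonempty := by
      rw [← Finset.card_pos, ← aux_card pref own i _ _ hSc]
      exact Finset.card_pos.2 ⟨a, ha⟩
    obtain ⟨e, he⟩ := hE
    rw [Finset.mem_filter] at he
    have hx : ∀ o, own o = i → gg pref own S o = (pref i).best S := fun o ho => by rw [gg, ho]
    obtain ⟨hxS, hxm⟩ := best_spec (pref i) S hS
    set x := (pref i).best S with hxdef
    have hxA : x ∈ TTCaux pref own (f + 1) S i := by
      rw [aux_succ _ _ _ _ hS]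
      apply Finset.mem_union_left
      rw [Finset.mem_image]
      by_cases hox : own x = i
      · refine ⟨x, ?_, hx x hox⟩
        rw [Finset.mem_filter, CC, Finset.mem_filter]
        exact ⟨⟨hxS, 1, one_pos, hx x hox⟩, hox⟩
      · have hw := hq (own x) hox S ⟨e, he⟩
        refine ⟨(pref (own x)).best S, ?_, hx _ hw.1⟩
        rw [Finset.mem_filter, CC, Finset.mem_filter]
        refine ⟨⟨(best_spec _ S hS).1, 2, two_pos, ?_⟩, hw.1⟩
        rw [Function.iterate_succ_apply, Function.iterate_one, hx _ hw.1]
        rfl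
    have hxb : x ≠ b := fun h => hbA (h ▸ hxA)
    have hxsb : (pref i).strict {x} {b} := by
      rcases hxm b hb with h | h
      · exact h
      · exact absurd (Finset.singleton_injective h) hxb
    rw [aux_succ _ _ _ _ hS, Finset.mem_union] at ha hbA
    push Not at hbA
    rcases ha with ha | ha
    · obtain ⟨o, ho, rfl⟩ := Finset.mem_image.1 ha
      rw [hx o (Finset.mem_filter.1 ho).2]
      exact hxsb
    have hc' := card_sdiff_CC pref own hS hSc
    by_cases hbC : b ∈ CC pref own S
    · -- b is the worst remaining endowment of agent i
      have hbw : ∃ j, j ≠ i ∧ b = (pref j).best S := by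
        have h0 := hbC
        rw [CC, Finset.mem_filter] at h0
        obtain ⟨_, k, hk, hkb⟩ := h0
        obtain ⟨m, rfl⟩ : ∃ m, k = m + 1 := ⟨k - 1, by omega⟩
        rw [Function.iterate_succ_apply'] at hkb
        refine ⟨own ((gg pref own S)^[m] b), ?_, hkb.symm⟩
        intro h
        rw [hx _ h] at hkb
        exact hxb hkb
      obtain ⟨j, hj, hbj⟩ := hbw
      have hw := hq j hj S ⟨e, he⟩
      rw [← hbj] at hw
      by_contra hab
      have hE'gt : ∀ y ∈ (S \ CC pref own S).filter (fun o => own o = i),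
          (pref i).strict {y} {b} := by
        intro y hy
        rw [Finset.mem_filter, Finset.mem_sdiff] at hy
        rcases hw.2 y hy.1.1 hy.2 with h | h
        · exact h
        · rw [Finset.singleton_injective h] at hy
          exact absurd hbC hy.1.2
      have hsub : (S \ CC pref own S).filter (fun o => own o = i) ⊆
          TTCaux pref own f (S \ CC pref own S) i := by
        intro y hy
        by_contra hyA
        have h1 := ih _ hc' a ha y (Finset.mem_filter.1 hy).1 hyA
        exact hab ((pref i).trans _ _ _ h1 (hE'gt y hy))
      have heq := Finset.eq_of_subset_of_card_le hsub (aux_card pref own i f _ hc').le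
      rw [← heq] at ha
      exact hab (hE'gt a ha)
    · exact ih _ hc' a ha b (Finset.mem_sdiff.2 ⟨hb, hbC⟩) hbA.2

theorem aux_keep (pref : N → Pref O) (own : O → N) (i : N)
    (hq : ∀ j, j ≠ i → ∀ S : Finset O, (∃ o ∈ S, own o = j) → own ((pref j).best S) = j)
    (f : ℕ) : ∀ S : Finset O, S.card ≤ f →
      TTCaux pref own f S i = S.filter fun o => own o = i := by
  induction f with
  | zero => intro S hS; simp [Finset.card_eq_zero.1 (Nat.le_zero.1 hS), TTCaux]
  | succ f ih =>
    intro S hSc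
    rcases S.eq_empty_or_nonempty with rfl | hS
    · simp [aux_empty]
    rw [aux_succ _ _ _ _ hS, ih _ (card_sdiff_CC pref own hS hSc)]
    have hfix : ∀ o ∈ (CC pref own S).filter (fun o => own o = i), gg pref own S o = o := by
      intro o ho
      rw [Finset.mem_filter, CC, Finset.mem_filter] at ho
      obtain ⟨⟨hoS, k, hk, hko⟩, hoi⟩ := ho
      obtain ⟨m, rfl⟩ : ∃ m, k = m + 1 := ⟨k - 1, by omega⟩
      rw [Function.iterate_succ_apply] at hko
      by_cases hj : own (gg pref own S o) = i
      · have hf : gg pref own S (gg pref own S o) = gg pref own S o := by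
          rw [gg, hj, gg, hoi]
        rwa [Function.iterate_fixed hf] at hko
      · exfalso
        have hall : ∀ m, own ((gg pref own S)^[m] (gg pref own S o)) =
            own (gg pref own S o) := by
          intro m
          induction m with
          | zero => rfl
          | succ m ihm =>
            rw [Function.iterate_succ_apply', gg, ihm]
            exact hq _ hj S ⟨_, gg_mem _ _ hS o, rfl⟩
        have := hall m
        rw [hko, hoi] at this
        exact hj this.symm
    have himg : ((CC pref own S).filter (fun o => own o = i)).image (gg pref own S) =
        (CC pref own S).filter (fun o => own o = i) := by
      ext y
      rw [Finset.mem_image]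
      constructor
      · rintro ⟨o, ho, rfl⟩
        rwa [hfix o ho]
      · intro hy
        exact ⟨y, hy, hfix y hy⟩
    rw [himg, ← Finset.filter_union, Finset.union_sdiff_of_subset (CC_sub pref own S)]

theorem opp_keep [Fintype O] (ω : Allocation N O) (i : N) (p : Pref O) (hp : Responsive p) :
    (Finset.univ.filter fun o => ω.owner o = i) ∈ Opp ω i p := by
  let r : N → O → ℕ := fun j x => if ω.owner x = j then Fintype.card O + rk p x else rk p x
  have hr : ∀ j, Function.Injective (r j) := by
    intro j x y h
    have h1 := rk_bound p x
    have h2 := rk_bound p y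
    apply rk_inj p
    simp only [r] at h
    split_ifs at h <;> omega
  let Q : N → Pref O := fun j => if j = i then p else prefOf (r j) (hr j)
  refine ⟨Q, ?_, by simp [Q], ?_⟩
  · intro j
    by_cases h : j = i
    · simp only [Q, if_pos h]; exact hp
    · simp only [Q, if_neg h]; exact prefOf_resp _ _
  · apply aux_keep
    · intro j hj S ⟨o, ho, hoj⟩
      simp only [Q, if_neg hj]
      have h1 := prefOf_weak _ _ _ _ ((best_spec (prefOf (r j) (hr j)) S ⟨o, ho⟩).2 o ho)
      by_contra hne
      simp only [r, if_pos hoj, if_neg hne] at h1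
      have := rk_bound p ((prefOf (r j) (hr j)).best S)
      simp only [r] at this
      omega
    · rw [Finset.card_univ]; omega

theorem opp_top [Fintype O] (ω : Allocation N O) (i : N) (p : Pref O) (hp : Responsive p) :
    ∃ T ∈ Opp ω i p, ∀ a ∈ T, ∀ b, b ∉ T → p.strict {a} {b} := by
  let r : O → ℕ := fun x =>
    if ω.owner x = i then Fintype.card O + (Fintype.card O - rk p x) else rk p x
  have hr : Function.Injective r := by
    intro x y h
    have h1 := rk_bound p x
    have h2 := rk_bound p y
    apply rk_inj p
    simp only [r] at h
    split_ifs at h <;> omega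
  let Q : N → Pref O := fun j => if j = i then p else prefOf r hr
  have hQi : Q i = p := by simp [Q]
  refine ⟨_, ⟨Q, ?_, hQi, rfl⟩, ?_⟩
  · intro j
    by_cases h : j = i
    · simp only [Q, if_pos h]; exact hp
    · simp only [Q, if_neg h]; exact prefOf_resp _ _
  · intro a ha b hb
    have := aux_top Q ω.owner i ?_ ?_ (Fintype.card O + 1) Finset.univ
      (by rw [Finset.card_univ]; omega) a ha b (Finset.mem_univ _) hb
    · rwa [hQi] at this
    · intro j hj S ⟨o, ho, hoi⟩
      have hQj : Q j = prefOf r hr := by simp only [Q, if_neg hj]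
      rw [hQi, hQj]
      have hb := best_spec (prefOf r hr) S ⟨o, ho⟩
      generalize (prefOf r hr).best S = w at hb
      have hbw := rk_bound p w
      have hwi : ω.owner w = i := by
        have h1 := prefOf_weak _ _ _ _ (hb.2 o ho)
        by_contra hne
        simp only [r, if_pos hoi, if_neg hne] at h1
        omega
      refine ⟨hwi, fun o' ho' hoi' => ?_⟩
      have h1 := prefOf_weak _ _ _ _ (hb.2 o' ho')
      simp only [r, if_pos hoi', if_pos hwi] at h1
      apply wk_of_not_st
      intro hst
      have := rk_lt p _ _ hst
      omega
    · intro j k hj hk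
      simp only [Q, if_neg hj, if_neg hk]

theorem opp_card [Fintype O] (ω : Allocation N O) (i : N) (p : Pref O) (A : Finset O)
    (hA : A ∈ Opp ω i p) : A.card = (Finset.univ.filter fun o => ω.owner o = i).card := by
  obtain ⟨Q, _, _, rfl⟩ := hA
  exact aux_card _ _ _ _ _ (by rw [Finset.card_univ]; omega)

end Helpers

/-- On the responsive domain, TTC is not obviously manipulable: whenever a
misreport `p'` strictly profits agent `i`, the `P i`-best bundle of her truthful
opportunity set is weakly better than the `P i`-best bundle of the misreport's
opportunity set, and likewise for the worst bundles. -/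
theorem stmt13 {N O : Type} [Fintype N] [Fintype O] [DecidableEq N] [DecidableEq O] [Nonempty O]
    (hN : 2 ≤ Fintype.card N) (hNO : Fintype.card N ≤ Fintype.card O)
    (ω : Allocation N O) :
    ∀ P : N → Pref O, (∀ j, Responsive (P j)) → ∀ i : N, ∀ p' : Pref O, Responsive p' →
      (P i).strict (TTC (Function.update P i p') ω i) (TTC P ω i) →
      ((∀ Bt ∈ Opp ω i (P i), ∀ Bm ∈ Opp ω i p',
          (∀ A ∈ Opp ω i (P i), (P i).weak Bt A) →
          (∀ A ∈ Opp ω i p', (P i).weak Bm A) →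
          (P i).weak Bt Bm) ∧
       (∀ Wt ∈ Opp ω i (P i), ∀ Wm ∈ Opp ω i p',
          (∀ A ∈ Opp ω i (P i), (P i).weak A Wt) →
          (∀ A ∈ Opp ω i p', (P i).weak A Wm) →
          (P i).weak Wt Wm)) := by
  intro P hP i p' hp' _
  constructor
  · intro Bt _ Bm hBm hbt _
    obtain ⟨T, hT, htop⟩ := opp_top ω i (P i) (hP i)
    refine wk_trans _ (hbt T hT) (top_weak _ (hP i) _ _ ?_ htop)
    rw [opp_card ω i _ _ hT, opp_card ω i _ _ hBm]
  · intro Wt hWt Wm _ _ hwm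
    refine wk_trans _ ?_ (hwm _ (opp_keep ω i p' hp'))
    obtain ⟨Q, hQ, hQi, rfl⟩ := hWt
    rw [← hQi]
    exact aux_ir Q ω.owner i (hQ i) _ _ (by rw [Finset.card_univ]; omega)

end Realloc
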